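/- arXiv:2204.03132 — 3 statements merged into one kernel-verified Lean document; each statement's English description precedes it below -/
import Mathlib

section
/- Suppose F : Z → ℝ^n is ℓ_F-Lipschitz and monotone ((z − z')ᵀ(F(z) − F(z')) ≥ 0 for all z, z' ∈ Z) and G : Z → ℝ is ℓ_G-smooth and convex, and set the AMP parameters α_k = 2/(k+1) and γ_k = k/(4ℓ_G + 3kℓ_F). Then for all k ≥ 2, max_{z∈Z} { G(z_k^{ag}) − G(z) + (z_k^{ag} − z)ᵀ F(z) } ≤ 16 ℓ_G D_Z² / (k(k−1)) + 12 ℓ_F D_Z² / (k−1). -/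
open scoped InnerProductSpace

noncomputable section

/-- `p = argmin_{z ∈ Z} γ ⟪z - w, u⟫ + ½ ‖z - w‖²`, i.e. `p` is the Euclidean projection
onto `Z` of `w - γ u`. -/
def IsArgminStep {E : Type*} [NormedAddCommGroup E] [InnerProductSpace ℝ E]
    (Z : Set E) (w : E) (γ : ℝ) (u : E) (p : E) : Prop :=
  p ∈ Z ∧ ∀ z ∈ Z, γ * ⟪p - w, u⟫_ℝ + ‖p - w‖ ^ 2 / 2 ≤ γ * ⟪z - w, u⟫_ℝ + ‖z - w‖ ^ 2 / 2

/-- The accelerated mirror-prox (AMP) iteration on `Z` for the operator `F` and the gradient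
`G'` of `G`, with parameters `a k` (the `α_k`) and `g k` (the `γ_k`), and iterates
`zmd k = z_k^{md}`, `z k = z_k`, `w k = w_k`, `zag k = z_k^{ag}` for `k ≥ 1`:
initialization `z 1 = z_1^{ag} = w 1 ∈ Z` and, for `k ≥ 1`,
`z_k^{md} = (1 - α_k) z_k^{ag} + α_k w_k`,
`z_{k+1} = argmin_{z ∈ Z} γ_k ⟪z - w_k, F(w_k) + ∇G(z_k^{md})⟫ + ½‖z - w_k‖²`,
`w_{k+1} = argmin_{z ∈ Z} γ_k ⟪z - w_k, F(z_{k+1}) + ∇G(z_k^{md})⟫ + ½‖z - w_k‖²`,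
`z_{k+1}^{ag} = (1 - α_k) z_k^{ag} + α_k z_{k+1}`. -/
def IsAMP {E : Type*} [NormedAddCommGroup E] [InnerProductSpace ℝ E]
    (Z : Set E) (F : E → E) (G' : E → E) (a g : ℕ → ℝ) (zmd z w zag : ℕ → E) : Prop :=
  z 1 = w 1 ∧ zag 1 = w 1 ∧ w 1 ∈ Z ∧
  ∀ k, 1 ≤ k →
    zmd k = (1 - a k) • zag k + a k • w k ∧
    IsArgminStep Z (w k) (g k) (F (w k) + G' (zmd k)) (z (k + 1)) ∧
    IsArgminStep Z (w k) (g k) (F (z (k + 1)) + G' (zmd k)) (w (k + 1)) ∧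
    zag (k + 1) = (1 - a k) • zag k + a k • z (k + 1)

/-!
Convexity and smoothness of `G`, together with monotonicity of `F`, bound the gap at the averaged
point `z_{k+1}^{ag}` by `1 - α_k` times the gap at `z_k^{ag}`, plus `α_k` times the linearised gap
at `z_{k+1}`, plus an error `ℓ_G α_k² ‖z_{k+1} - w_k‖² / 2`. The two prox steps from `w_k` form an
extragradient step: they bound the linearised gap by the telescoping quantity
`(‖w_k - y‖² - ‖w_{k+1} - y‖²) / (2γ_k)` minus a multiple of `‖z_{k+1} - w_k‖²`, which absorbs the
error when `γ_k² ℓ_F² + ℓ_G α_k γ_k ≤ 1`. Weights `β_k` with `(1 - α_{k+1}) β_{k+1} = β_k` turn the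
recursion into a sum whose coefficients `η_k = β_k α_k / γ_k` increase, so Abel summation bounds it
by `η_k D² / 2`. For the parameters at hand, `β_k = k (k + 1)` and `η_k = 2 (4 ℓ_G + 3 k ℓ_F)`.
-/

section Smooth

variable {E : Type*} [NormedAddCommGroup E] [NormedSpace ℝ E] {s : Set E} {f : E → ℝ}

lemma hasDerivWithinAt_comp_lineMap {V : Type*} [NormedAddCommGroup V] [NormedSpace ℝ V]
    {f : E → V} {f' : E →L[ℝ] V} (hs : Convex ℝ s) {x y : E} (hx : x ∈ s) (hy : y ∈ s) {t : ℝ}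
    (hf : HasFDerivWithinAt f f' s (AffineMap.lineMap x y t)) :
    HasDerivWithinAt (f ∘ AffineMap.lineMap x y) (f' (y - x)) (Set.Icc 0 1) t :=
  hf.comp_hasDerivWithinAt t AffineMap.hasDerivWithinAt_lineMap (hs.mapsTo_lineMap hx hy)

lemma add_fderivWithin_le_of_convexOn {f' : E →L[ℝ] ℝ} (hf : ConvexOn ℝ s f) {x y : E}
    (hx : x ∈ s) (hy : y ∈ s) (hf' : HasFDerivWithinAt f f' s x) :
    f x + f' (y - x) ≤ f y := by
  have hconv : ConvexOn ℝ (Set.Icc (0 : ℝ) 1) (f ∘ AffineMap.lineMap x y) :=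
    (hf.comp_affineMap _).subset (hf.1.mapsTo_lineMap hx hy) (convex_Icc 0 1)
  have hderiv := hasDerivWithinAt_comp_lineMap (t := 0) hf.1 hx hy (by simpa using hf')
  have hslope := hconv.le_slope_of_hasDerivWithinAt (by simp) (by simp) zero_lt_one hderiv
  simp only [slope_def_field, Function.comp_apply, AffineMap.lineMap_apply_one,
    AffineMap.lineMap_apply_zero, sub_zero, div_one] at hslope
  linarith

lemma le_add_fderivWithin_add_sq {f' : E → E →L[ℝ] ℝ} {L : ℝ} (hs : Convex ℝ s)
    (hf : ∀ z ∈ s, HasFDerivWithinAt f (f' z) s z) {x y : E} (hx : x ∈ s) (hy : y ∈ s)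
    (hL : ∀ z ∈ s, ‖f' z - f' x‖ ≤ L * ‖z - x‖) :
    f y ≤ f x + f' x (y - x) + L / 2 * ‖y - x‖ ^ 2 := by
  set c : ℝ →ᵃ[ℝ] E := AffineMap.lineMap x y with hc
  set φ : ℝ → ℝ := fun t => (f ∘ c) t - (t * f' x (y - x) + t ^ 2 * (L / 2 * ‖y - x‖ ^ 2)) with hφ
  have hmem : ∀ t ∈ Set.Icc (0 : ℝ) 1, c t ∈ s := fun t ht => hs.lineMap_mem hx hy ht
  have hderiv : ∀ t ∈ Set.Icc (0 : ℝ) 1, HasDerivWithinAt φ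
      (f' (c t) (y - x) - (f' x (y - x) + 2 * t * (L / 2 * ‖y - x‖ ^ 2))) (Set.Icc 0 1) t := by
    intro t ht
    have hquad := ((hasDerivAt_id t).mul_const (f' x (y - x))).fun_add
      ((hasDerivAt_pow 2 t).mul_const (L / 2 * ‖y - x‖ ^ 2))
    exact (hasDerivWithinAt_comp_lineMap hs hx hy (hf _ (hmem t ht))).sub
      (by simpa using hquad.hasDerivWithinAt)
  have hgrowth : ∀ t ∈ Set.Icc (0 : ℝ) 1,
      f' (c t) (y - x) - f' x (y - x) ≤ 2 * t * (L / 2 * ‖y - x‖ ^ 2) := by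
    intro t ht
    calc f' (c t) (y - x) - f' x (y - x) = (f' (c t) - f' x) (y - x) := rfl
      _ ≤ ‖f' (c t) - f' x‖ * ‖y - x‖ :=
        (Real.le_norm_self _).trans ((f' (c t) - f' x).le_opNorm _)
      _ ≤ L * ‖c t - x‖ * ‖y - x‖ := by gcongr; exact hL _ (hmem t ht)
      _ = 2 * t * (L / 2 * ‖y - x‖ ^ 2) := by
        rw [hc, AffineMap.lineMap_apply_module', add_sub_cancel_right, norm_smul,
          Real.norm_of_nonneg ht.1]
        ring
  have hanti : AntitoneOn φ (Set.Icc 0 1) :=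
    antitoneOn_of_hasDerivWithinAt_nonpos (convex_Icc 0 1)
      (fun t ht => (hderiv t ht).continuousWithinAt)
      (fun t ht => (hderiv t (interior_subset ht)).mono interior_subset)
      fun t ht => by linarith [hgrowth t (interior_subset ht)]
  have h := hanti (Set.left_mem_Icc.2 zero_le_one) (Set.right_mem_Icc.2 zero_le_one) zero_le_one
  simp only [hφ, hc, Function.comp_apply, AffineMap.lineMap_apply_one,
    AffineMap.lineMap_apply_zero] at h
  linarith

lemma convexCombo_le_of_convexOn_of_lipschitz {f' : E → E →L[ℝ] ℝ} {L : ℝ} (hf : ConvexOn ℝ s f)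
    (hf' : ∀ z ∈ s, HasFDerivWithinAt f (f' z) s z)
    (hL : ∀ z ∈ s, ∀ z' ∈ s, ‖f' z - f' z'‖ ≤ L * ‖z - z'‖)
    {α : ℝ} (hα : α ∈ Set.Icc (0 : ℝ) 1) {x w p y m : E} (hx : x ∈ s) (hw : w ∈ s) (hp : p ∈ s)
    (hy : y ∈ s) (hm : m = (1 - α) • x + α • w) :
    f ((1 - α) • x + α • p) ≤
      (1 - α) * f x + α * (f y + f' m (p - y)) + L / 2 * (α ^ 2 * ‖p - w‖ ^ 2) := by
  have hα' : 0 ≤ 1 - α := sub_nonneg.2 hα.2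
  have hms : m ∈ s := hm ▸ hf.1 hx hw hα' hα.1 (sub_add_cancel 1 α)
  have hdescent := le_add_fderivWithin_add_sq hf.1 hf' hms
    (hf.1 hx hp hα' hα.1 (sub_add_cancel 1 α)) fun z hz => hL z hz m hms
  have hdiff : (1 - α) • x + α • p - m = α • (p - w) := by rw [hm]; module
  have hlin : f' m (α • (p - w)) =
      (1 - α) * f' m (x - m) + α * (f' m (y - m) + f' m (p - y)) := by
    simp only [← smul_eq_mul, ← map_add, ← map_smul, hm]
    congr 1
    module
  rw [hdiff, hlin, norm_smul, mul_pow, Real.norm_eq_abs, sq_abs] at hdescent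
  have htangent_x := add_fderivWithin_le_of_convexOn hf hms hx (hf' m hms)
  have htangent_y := add_fderivWithin_le_of_convexOn hf hms hy (hf' m hms)
  linarith [mul_le_mul_of_nonneg_left htangent_x hα', mul_le_mul_of_nonneg_left htangent_y hα.1]

end Smooth

variable {E : Type*} [NormedAddCommGroup E] [InnerProductSpace ℝ E] {Z : Set E}

section ProxStep

variable {w u v p q y : E} {γ : ℝ}

lemma IsArgminStep.norm_sub_eq_iInf (h : IsArgminStep Z w γ u p) :
    ‖w - γ • u - p‖ = ⨅ z : Z, ‖w - γ • u - z‖ := by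
  have hsq (z : E) : ‖w - γ • u - z‖ ^ 2 =
      2 * (γ * ⟪z - w, u⟫_ℝ + ‖z - w‖ ^ 2 / 2) + ‖γ • u‖ ^ 2 := by
    rw [show w - γ • u - z = -(z - w + γ • u) by abel, norm_neg, norm_add_sq_real,
      real_inner_smul_right]
    ring
  have : Nonempty Z := ⟨⟨p, h.1⟩⟩
  refine le_antisymm (le_ciInf fun z => ?_)
    (ciInf_le ⟨0, Set.forall_mem_range.2 fun _ => norm_nonneg _⟩ (⟨p, h.1⟩ : Z))
  refine le_of_sq_le_sq ?_ (norm_nonneg _)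
  rw [hsq, hsq]
  linarith [h.2 z z.2]

lemma IsArgminStep.mul_inner_sub_le (hZ : Convex ℝ Z) (h : IsArgminStep Z w γ u p) (hy : y ∈ Z) :
    γ * ⟪p - y, u⟫_ℝ ≤ (‖w - y‖ ^ 2 - ‖p - y‖ ^ 2 - ‖p - w‖ ^ 2) / 2 := by
  have hvar : ⟪w - γ • u - p, y - p⟫_ℝ ≤ 0 :=
    (norm_eq_iInf_iff_real_inner_le_zero hZ h.1).1 h.norm_sub_eq_iInf y hy
  have hsplit : ⟪w - γ • u - p, y - p⟫_ℝ = γ * ⟪p - y, u⟫_ℝ + ⟪p - w, p - y⟫_ℝ := by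
    rw [← real_inner_smul_right, real_inner_comm, ← inner_neg_neg, ← neg_sub p y]
    simp only [inner_sub_left, inner_sub_right, inner_neg_left, inner_neg_right,
      real_inner_comm]
    ring
  have hpolar : ‖w - y‖ ^ 2 = ‖p - y‖ ^ 2 - 2 * ⟪p - w, p - y⟫_ℝ + ‖p - w‖ ^ 2 := by
    rw [← sub_sub_sub_cancel_left y w p, norm_sub_sq_real, real_inner_comm]
  linarith

lemma IsArgminStep.mul_inner_sub_le_of_extragradient {L : ℝ} (hZ : Convex ℝ Z) (hγ : 0 ≤ γ)
    (hp : IsArgminStep Z w γ u p) (hq : IsArgminStep Z w γ v q)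
    (huv : ‖v - u‖ ≤ L * ‖p - w‖) (hy : y ∈ Z) :
    γ * ⟪p - y, v⟫_ℝ ≤
      (‖w - y‖ ^ 2 - ‖q - y‖ ^ 2) / 2 - (1 - γ ^ 2 * L ^ 2) / 2 * ‖p - w‖ ^ 2 := by
  have hpq := hp.mul_inner_sub_le hZ hq.1
  have hqy := hq.mul_inner_sub_le hZ hy
  have hsplit : ⟪p - y, v⟫_ℝ = ⟪q - y, v⟫_ℝ + ⟪p - q, u⟫_ℝ + ⟪p - q, v - u⟫_ℝ := by
    simp only [inner_sub_left, inner_sub_right]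
    ring
  have hcross : γ * ⟪p - q, v - u⟫_ℝ ≤ (‖p - q‖ ^ 2 + γ ^ 2 * L ^ 2 * ‖p - w‖ ^ 2) / 2 :=
    calc γ * ⟪p - q, v - u⟫_ℝ ≤ γ * (‖p - q‖ * (L * ‖p - w‖)) := by
          gcongr
          exact (real_inner_le_norm _ _).trans (by gcongr)
      _ ≤ (‖p - q‖ ^ 2 + γ ^ 2 * L ^ 2 * ‖p - w‖ ^ 2) / 2 := by
          linarith [two_mul_le_add_sq ‖p - q‖ (γ * L * ‖p - w‖)]
  rw [norm_sub_rev w q] at hpq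
  rw [hsplit]
  linarith

end ProxStep

/-- The gap of `x` against the test point `y` in the variational inequality with operator
`F + ∇G`. Its maximum over `y ∈ Z` is the weak (Minty) gap of `x`; `F` is evaluated at `y`. -/
def mintyGap (F : E → E) (G : E → ℝ) (x y : E) : ℝ :=
  G x - G y + ⟪x - y, F y⟫_ℝ

variable {F G' : E → E} {G : E → ℝ} {ℓF ℓG D : ℝ}

-- `HasFDerivWithinAt G (innerSL ℝ (G' z)) Z z` makes `G' z` a gradient of `G` relative to `Z`;
-- unlike `HasGradientWithinAt`, it does not require a complete space.
lemma mintyGap_convexCombo_le (hGconv : ConvexOn ℝ Z G)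
    (hGgrad : ∀ z ∈ Z, HasFDerivWithinAt G (innerSL ℝ (G' z)) Z z)
    (hGlip : ∀ z ∈ Z, ∀ z' ∈ Z, ‖G' z - G' z'‖ ≤ ℓG * ‖z - z'‖)
    {α : ℝ} (hα : α ∈ Set.Icc (0 : ℝ) 1) {x w p y m : E} (hx : x ∈ Z) (hw : w ∈ Z) (hp : p ∈ Z)
    (hy : y ∈ Z) (hm : m = (1 - α) • x + α • w) (hFmono : 0 ≤ ⟪p - y, F p - F y⟫_ℝ) :
    mintyGap F G ((1 - α) • x + α • p) y ≤ (1 - α) * mintyGap F G x y +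
      α * ⟪p - y, F p + G' m⟫_ℝ + ℓG / 2 * (α ^ 2 * ‖p - w‖ ^ 2) := by
  have hG := convexCombo_le_of_convexOn_of_lipschitz hGconv hGgrad
    (fun z hz z' hz' => by simpa only [← map_sub, innerSL_apply_norm] using hGlip z hz z' hz')
    hα hx hw hp hy hm
  rw [innerSL_apply_apply, real_inner_comm] at hG
  have hF : ⟪(1 - α) • x + α • p - y, F y⟫_ℝ ≤
      (1 - α) * ⟪x - y, F y⟫_ℝ + α * ⟪p - y, F p⟫_ℝ := by
    rw [show (1 - α) • x + α • p - y = (1 - α) • (x - y) + α • (p - y) by module,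
      inner_add_left, real_inner_smul_left, real_inner_smul_left]
    rw [inner_sub_right, sub_nonneg] at hFmono
    gcongr
    exact hα.1
  rw [inner_add_right]
  simp only [mintyGap]
  linarith

section Iteration

variable {α γ : ℕ → ℝ} {zmd z w zag : ℕ → E}

lemma IsAMP.w_mem (h : IsAMP Z F G' α γ zmd z w zag) {k : ℕ} (hk : 1 ≤ k) : w k ∈ Z := by
  obtain ⟨-, -, hw, hiter⟩ := h
  cases k, hk using Nat.le_induction with
  | base => exact hw
  | succ k hk => exact (hiter k hk).2.2.1.1

lemma IsAMP.zag_mem (hZ : Convex ℝ Z) (h : IsAMP Z F G' α γ zmd z w zag)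
    (hα : ∀ k, 1 ≤ k → α k ∈ Set.Icc (0 : ℝ) 1) {k : ℕ} (hk : 1 ≤ k) : zag k ∈ Z := by
  obtain ⟨-, hzag, hw, hiter⟩ := h
  induction k, hk using Nat.le_induction with
  | base => exact hzag ▸ hw
  | succ k hk ih =>
    obtain ⟨-, hz, -, hzag⟩ := hiter k hk
    exact hzag ▸ hZ ih hz.1 (sub_nonneg.2 (hα k hk).2) (hα k hk).1 (sub_add_cancel 1 (α k))

lemma IsAMP.mul_mintyGap_succ_le
    (hFlip : ∀ z ∈ Z, ∀ z' ∈ Z, ‖F z - F z'‖ ≤ ℓF * ‖z - z'‖)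
    (hFmono : ∀ z ∈ Z, ∀ z' ∈ Z, 0 ≤ ⟪z - z', F z - F z'⟫_ℝ)
    (hGconv : ConvexOn ℝ Z G) (hGgrad : ∀ z ∈ Z, HasFDerivWithinAt G (innerSL ℝ (G' z)) Z z)
    (hGlip : ∀ z ∈ Z, ∀ z' ∈ Z, ‖G' z - G' z'‖ ≤ ℓG * ‖z - z'‖)
    (h : IsAMP Z F G' α γ zmd z w zag) (hα : ∀ k, 1 ≤ k → α k ∈ Set.Icc (0 : ℝ) 1)
    {k : ℕ} (hk : 1 ≤ k) (hγ : 0 ≤ γ k) (hstep : γ k ^ 2 * ℓF ^ 2 + ℓG * α k * γ k ≤ 1)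
    {y : E} (hy : y ∈ Z) :
    γ k * mintyGap F G (zag (k + 1)) y ≤ (1 - α k) * (γ k * mintyGap F G (zag k) y) +
      α k * ((‖w k - y‖ ^ 2 - ‖w (k + 1) - y‖ ^ 2) / 2) := by
  obtain ⟨hmd, hz, hw, hag⟩ := h.2.2.2 k hk
  have hwk := h.w_mem hk
  have hgap := mintyGap_convexCombo_le hGconv hGgrad hGlip (hα k hk)
    (h.zag_mem hGconv.1 hα hk) hwk hz.1 hy hmd (hFmono _ hz.1 y hy)
  rw [← hag] at hgap
  have hextra := hz.mul_inner_sub_le_of_extragradient hGconv.1 hγ hw (L := ℓF)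
    (by simpa only [add_sub_add_right_eq_sub] using hFlip _ hz.1 _ hwk) hy
  have habsorb : 0 ≤ α k * ‖z (k + 1) - w k‖ ^ 2 *
      (1 - (γ k ^ 2 * ℓF ^ 2 + ℓG * α k * γ k)) :=
    mul_nonneg (mul_nonneg (hα k hk).1 (sq_nonneg _)) (sub_nonneg.2 hstep)
  linarith [mul_le_mul_of_nonneg_left hgap hγ, mul_le_mul_of_nonneg_left hextra (hα k hk).1]

theorem IsAMP.weight_mul_mintyGap_le
    (hFlip : ∀ z ∈ Z, ∀ z' ∈ Z, ‖F z - F z'‖ ≤ ℓF * ‖z - z'‖)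
    (hFmono : ∀ z ∈ Z, ∀ z' ∈ Z, 0 ≤ ⟪z - z', F z - F z'⟫_ℝ)
    (hGconv : ConvexOn ℝ Z G) (hGgrad : ∀ z ∈ Z, HasFDerivWithinAt G (innerSL ℝ (G' z)) Z z)
    (hGlip : ∀ z ∈ Z, ∀ z' ∈ Z, ‖G' z - G' z'‖ ≤ ℓG * ‖z - z'‖)
    (h : IsAMP Z F G' α γ zmd z w zag) (hα : ∀ k, 1 ≤ k → α k ∈ Set.Icc (0 : ℝ) 1)
    (hγ : ∀ k, 1 ≤ k → 0 < γ k)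
    (hstep : ∀ k, 1 ≤ k → γ k ^ 2 * ℓF ^ 2 + ℓG * α k * γ k ≤ 1)
    {β η : ℕ → ℝ} (hβ_zero : β 0 = 0) (hβ_nonneg : ∀ k, 0 ≤ β k)
    (hβ : ∀ k, (1 - α (k + 1)) * β (k + 1) = β k)
    (hη_zero : 0 ≤ η 0) (hη_mono : Monotone η)
    (hη : ∀ k, η (k + 1) * γ (k + 1) = β (k + 1) * α (k + 1))
    {y : E} (hy : y ∈ Z) (hD : ∀ z ∈ Z, ‖z - y‖ ≤ D) (k : ℕ) :
    β k * mintyGap F G (zag (k + 1)) y ≤ η k / 2 * (D ^ 2 - ‖w (k + 1) - y‖ ^ 2) := by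
  have hdist (k : ℕ) : 0 ≤ D ^ 2 - ‖w (k + 1) - y‖ ^ 2 :=
    sub_nonneg.2 (pow_le_pow_left₀ (norm_nonneg _) (hD _ (h.w_mem k.succ_pos)) 2)
  induction k with
  | zero =>
    rw [hβ_zero, zero_mul]
    exact mul_nonneg (div_nonneg hη_zero zero_le_two) (hdist 0)
  | succ k ih =>
    have hγ_pos := hγ (k + 1) k.succ_pos
    have hgap := h.mul_mintyGap_succ_le hFlip hFmono hGconv hGgrad hGlip hα k.succ_pos hγ_pos.le
      (hstep _ k.succ_pos) hy
    set d := ‖w (k + 1) - y‖ ^ 2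
    set d' := ‖w (k + 1 + 1) - y‖ ^ 2
    set Q := mintyGap F G (zag (k + 1)) y
    set Q' := mintyGap F G (zag (k + 1 + 1)) y
    have hrec : β (k + 1) * Q' ≤ β k * Q + η (k + 1) / 2 * (d - d') := by
      refine le_of_mul_le_mul_left ?_ hγ_pos
      calc γ (k + 1) * (β (k + 1) * Q') = β (k + 1) * (γ (k + 1) * Q') := by ring
        _ ≤ β (k + 1) * ((1 - α (k + 1)) * (γ (k + 1) * Q) + α (k + 1) * ((d - d') / 2)) :=
          mul_le_mul_of_nonneg_left hgap (hβ_nonneg _)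
        _ = γ (k + 1) * (((1 - α (k + 1)) * β (k + 1)) * Q) +
            (β (k + 1) * α (k + 1)) * ((d - d') / 2) := by ring
        _ = γ (k + 1) * (β k * Q + η (k + 1) / 2 * (d - d')) := by rw [hβ, ← hη]; ring
    have hη_le : η k / 2 * (D ^ 2 - d) ≤ η (k + 1) / 2 * (D ^ 2 - d) :=
      mul_le_mul_of_nonneg_right (by linarith [hη_mono k.le_succ]) (hdist k)
    linarith

end Iteration

section Parameters

variable {k : ℝ}

lemma amp_stepsize_denom_pos (hk : 1 ≤ k) (hℓF : 0 ≤ ℓF) (hℓG : 0 ≤ ℓG) (hℓ : 0 < ℓF + ℓG) :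
    0 < 4 * ℓG + 3 * k * ℓF := by
  linarith [le_mul_of_one_le_left hℓF hk]

lemma amp_stepsize_le_one (hk : 1 ≤ k) (hℓF : 0 ≤ ℓF) (hℓG : 0 ≤ ℓG) (hℓ : 0 < ℓF + ℓG) :
    (k / (4 * ℓG + 3 * k * ℓF)) ^ 2 * ℓF ^ 2 +
      ℓG * (2 / (k + 1)) * (k / (4 * ℓG + 3 * k * ℓF)) ≤ 1 := by
  have hc := amp_stepsize_denom_pos hk hℓF hℓG hℓ
  have hk0 : 0 < k := by linarith
  set c := 4 * ℓG + 3 * k * ℓF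
  have hF : (k / c) ^ 2 * ℓF ^ 2 ≤ 1 / 2 := by
    have hratio : k / c * ℓF ≤ 1 / 3 := by
      rw [div_mul_eq_mul_div, div_le_iff₀ hc]
      linarith
    calc (k / c) ^ 2 * ℓF ^ 2 = (k / c * ℓF) ^ 2 := by ring
      _ ≤ (1 / 3) ^ 2 := by gcongr
      _ ≤ 1 / 2 := by norm_num
  have hG : ℓG * (2 / (k + 1)) * (k / c) ≤ 1 / 2 := by
    have hratio : k / (k + 1) ≤ 1 := (div_le_one (by positivity)).2 (by linarith)
    have hquarter : ℓG / c ≤ 1 / 4 := by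
      rw [div_le_iff₀ hc]
      linarith [mul_nonneg hk0.le hℓF]
    calc ℓG * (2 / (k + 1)) * (k / c) = 2 * (k / (k + 1)) * (ℓG / c) := by ring
      _ ≤ 2 * 1 * (1 / 4) := by gcongr
      _ = 1 / 2 := by norm_num
  linarith

lemma amp_rate_le (hk : 1 < k) (hℓF : 0 ≤ ℓF) (hℓG : 0 ≤ ℓG) :
    4 * ℓG * D ^ 2 / (k * (k - 1)) + 3 * ℓF * D ^ 2 / k ≤
      16 * ℓG * D ^ 2 / (k * (k - 1)) + 12 * ℓF * D ^ 2 / (k - 1) := by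
  have : 0 < k - 1 := sub_pos.2 hk
  have : 0 < k := by linarith
  gcongr <;> linarith

end Parameters

theorem statement_3_general (hℓF : 0 ≤ ℓF) (hℓG : 0 ≤ ℓG) (hℓ : 0 < ℓF + ℓG)
    (hD : ∀ z ∈ Z, ∀ z' ∈ Z, ‖z - z'‖ ≤ D)
    (hFlip : ∀ z ∈ Z, ∀ z' ∈ Z, ‖F z - F z'‖ ≤ ℓF * ‖z - z'‖)
    (hFmono : ∀ z ∈ Z, ∀ z' ∈ Z, 0 ≤ ⟪z - z', F z - F z'⟫_ℝ)
    (hGconv : ConvexOn ℝ Z G) (hGgrad : ∀ z ∈ Z, HasFDerivWithinAt G (innerSL ℝ (G' z)) Z z)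
    (hGlip : ∀ z ∈ Z, ∀ z' ∈ Z, ‖G' z - G' z'‖ ≤ ℓG * ‖z - z'‖)
    {zmd z w zag : ℕ → E}
    (hAMP : IsAMP Z F G' (fun k => 2 / ((k : ℝ) + 1))
      (fun k => (k : ℝ) / (4 * ℓG + 3 * (k : ℝ) * ℓF)) zmd z w zag)
    {k : ℕ} (hk : 2 ≤ k) {y : E} (hy : y ∈ Z) :
    mintyGap F G (zag k) y ≤
      4 * ℓG * D ^ 2 / ((k : ℝ) * ((k : ℝ) - 1)) + 3 * ℓF * D ^ 2 / (k : ℝ) := by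
  have hcast {i : ℕ} (hi : 1 ≤ i) : (1 : ℝ) ≤ i := by exact_mod_cast hi
  have hc {i : ℕ} (hi : 1 ≤ i) : 0 < 4 * ℓG + 3 * (i : ℝ) * ℓF :=
    amp_stepsize_denom_pos (hcast hi) hℓF hℓG hℓ
  have hα (i : ℕ) (hi : 1 ≤ i) : 2 / ((i : ℝ) + 1) ∈ Set.Icc (0 : ℝ) 1 :=
    ⟨by positivity, (div_le_one (by positivity)).2 (by linarith [hcast hi])⟩
  have hγ (i : ℕ) (hi : 1 ≤ i) : 0 < (i : ℝ) / (4 * ℓG + 3 * (i : ℝ) * ℓF) :=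
    div_pos (by linarith [hcast hi]) (hc hi)
  obtain ⟨j, rfl⟩ : ∃ j, k = j + 1 := ⟨k - 1, by lia⟩
  have hj : 1 ≤ j := by lia
  have hgap := hAMP.weight_mul_mintyGap_le hFlip hFmono hGconv hGgrad hGlip hα hγ
    (fun i hi => amp_stepsize_le_one (hcast hi) hℓF hℓG hℓ)
    (β := fun i => i * (i + 1)) (η := fun i => 2 * (4 * ℓG + 3 * i * ℓF))
    (hβ_zero := by simp) (hβ_nonneg := fun i => by positivity)
    (hβ := fun i => by push_cast; field_simp; ring)
    (hη_zero := by positivity) (hη_mono := fun a b hab => by dsimp only; gcongr)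
    (hη := fun i => by have := hc i.succ_pos; field_simp)
    hy (fun z hz => hD z hz y hy) j
  push_cast
  rw [add_sub_cancel_right]
  calc mintyGap F G (zag (j + 1)) y ≤ (4 * ℓG + 3 * j * ℓF) * D ^ 2 / (j * (j + 1)) := by
        rw [le_div_iff₀' (by positivity)]
        have : 0 ≤ (4 * ℓG + 3 * j * ℓF) * ‖w (j + 1) - y‖ ^ 2 := by positivity
        linarith
    _ = 4 * ℓG * D ^ 2 / ((j + 1) * j) + 3 * ℓF * D ^ 2 / (j + 1) := by field_simp

/-- Theorem AMP-MT: convergence of AMP for monotone operators.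
If `F` is `ℓ_F`-Lipschitz and monotone on `Z` and `G` is `ℓ_G`-smooth and convex on `Z`,
and the AMP parameters are `α_k = 2/(k+1)`, `γ_k = k/(4ℓ_G + 3kℓ_F)`, then for all `k ≥ 2`,
`max_{z ∈ Z} {G(z_k^{ag}) - G(z) + ⟪z_k^{ag} - z, F(z)⟫} ≤ 16 ℓ_G D_Z²/(k(k-1)) +
12 ℓ_F D_Z²/(k-1)`. -/
theorem statement_3 {n : ℕ} (Z : Set (EuclideanSpace ℝ (Fin n)))
    (hZne : Z.Nonempty) (hZclosed : IsClosed Z) (hZconvex : Convex ℝ Z)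
    (D ℓF ℓG : ℝ) (hℓF : 0 < ℓF) (hℓG : 0 < ℓG)
    (hD : ∀ z ∈ Z, ∀ z' ∈ Z, ‖z - z'‖ ≤ D)
    (F : EuclideanSpace ℝ (Fin n) → EuclideanSpace ℝ (Fin n))
    (hFlip : ∀ z ∈ Z, ∀ z' ∈ Z, ‖F z - F z'‖ ≤ ℓF * ‖z - z'‖)
    (hFmono : ∀ z ∈ Z, ∀ z' ∈ Z, (0:ℝ) ≤ ⟪z - z', F z - F z'⟫_ℝ)
    (G : EuclideanSpace ℝ (Fin n) → ℝ) (G' : EuclideanSpace ℝ (Fin n) → EuclideanSpace ℝ (Fin n))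
    (hGconv : ConvexOn ℝ Z G)
    (hGgrad : ∀ z ∈ Z, HasGradientAt G (G' z) z)
    (hGlip : ∀ z ∈ Z, ∀ z' ∈ Z, ‖G' z - G' z'‖ ≤ ℓG * ‖z - z'‖)
    (zmd z w zag : ℕ → EuclideanSpace ℝ (Fin n))
    (hAMP : IsAMP Z F G' (fun k => 2 / ((k : ℝ) + 1))
      (fun k => (k : ℝ) / (4 * ℓG + 3 * (k : ℝ) * ℓF)) zmd z w zag) :
    ∀ k : ℕ, 2 ≤ k → ∀ y ∈ Z,
      G (zag k) - G y + ⟪zag k - y, F y⟫_ℝ ≤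
        16 * ℓG * D ^ 2 / ((k : ℝ) * ((k : ℝ) - 1)) + 12 * ℓF * D ^ 2 / ((k : ℝ) - 1) := by
  intro k hk y hy
  exact (statement_3_general hℓF.le hℓG.le (add_pos hℓF hℓG) hD hFlip hFmono hGconv
    (fun x hx => (hGgrad x hx).hasFDerivAt.hasFDerivWithinAt) hGlip hAMP hk hy).trans
    (amp_rate_le (by exact_mod_cast hk) hℓF.le hℓG.le)
end
end

section
/- Let Z ⊆ ℝ^n be nonempty, closed and convex, let F : Z → ℝ^n be ℓ_F-Lipschitz, let g ∈ ℝ^n be any fixed vector, let w_k ∈ Z and γ_k > 0, and define z_{k+1} = argmin_{z∈Z} γ_k (z − w_k)ᵀ(F(w_k) + g) + ½‖z − w_k‖² and w_{k+1} = argmin_{z∈Z} γ_k (z − w_k)ᵀ(F(z_{k+1}) + g) + ½‖z − w_k‖² (Euclidean projections of w_k − γ_k(F(w_k)+g) and w_k − γ_k(F(z_{k+1})+g) onto Z). Then for all z ∈ Z: γ_k (z_{k+1} − z)ᵀ(F(z_{k+1}) + g) ≤ ½(‖z − w_k‖² − ‖z − w_{k+1}‖²) − (½ − γ_k² ℓ_F²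 / 2)‖z_{k+1} − w_k‖². -/
open scoped InnerProductSpace

noncomputable section

/-!
Each step is a Euclidean projection, so the obtuse-angle criterion for projections yields a
three-point inequality. Let `p` be the step from `w` along `u` and `q` the corrected step from `w`
along `v`; in the theorem `u = F w + g` and `v = F p + g`. Apply the inequality to `p` with
competitor `q`, and to `q` with competitor `z`. The sum controls `γ ⟪p - z, v⟫` up to the error
`γ ⟪p - q, v - u⟫`, which Young's inequality splits into `‖q - p‖ ^ 2 / 2`, cancelled by the
three-point inequality for `p`, and `γ ^ 2 * ‖v - u‖ ^ 2 / 2`, which the Lipschitz bound controls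
by `‖p - w‖ ^ 2`.
-/

section

variable {E : Type*} [NormedAddCommGroup E] [InnerProductSpace ℝ E]

theorem real_inner_le_half_norm_sq_add_norm_sq (x y : E) :
    ⟪x, y⟫_ℝ ≤ (‖x‖ ^ 2 + ‖y‖ ^ 2) / 2 := by
  linarith [norm_sub_sq_real x y, sq_nonneg ‖x - y‖]

theorem mul_inner_add_half_norm_sq_eq (γ : ℝ) (x u : E) :
    γ * ⟪x, u⟫_ℝ + ‖x‖ ^ 2 / 2 = (‖x + γ • u‖ ^ 2 - ‖γ • u‖ ^ 2) / 2 := by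
  rw [norm_add_sq_real, real_inner_smul_right]
  ring

namespace IsArgminStep

variable {Z : Set E} {w u v p q z : E} {γ : ℝ}

theorem norm_sub_le (hp : IsArgminStep Z w γ u p) (hz : z ∈ Z) :
    ‖w - γ • u - p‖ ≤ ‖w - γ • u - z‖ := by
  have hmin := hp.2 z hz
  rw [mul_inner_add_half_norm_sq_eq, mul_inner_add_half_norm_sq_eq] at hmin
  have hrev (y : E) : ‖w - γ • u - y‖ = ‖y - w + γ • u‖ := by
    rw [norm_sub_rev, sub_sub_eq_add_sub, add_sub_right_comm]
  rw [hrev, hrev]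
  exact le_of_sq_le_sq (by linarith) (norm_nonneg _)

theorem norm_sub_eq_iInf_s5 (hp : IsArgminStep Z w γ u p) :
    ‖w - γ • u - p‖ = ⨅ z : Z, ‖w - γ • u - z‖ := by
  have : Nonempty Z := ⟨⟨p, hp.1⟩⟩
  have hbdd : BddBelow (Set.range fun z : Z ↦ ‖w - γ • u - z‖) :=
    ⟨0, Set.forall_mem_range.2 fun _ ↦ norm_nonneg _⟩
  exact le_antisymm (le_ciInf fun z ↦ hp.norm_sub_le z.2) (ciInf_le hbdd ⟨p, hp.1⟩)

theorem inner_sub_nonpos (hp : IsArgminStep Z w γ u p) (hZ : Convex ℝ Z) (hz : z ∈ Z) :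
    ⟪w - γ • u - p, z - p⟫_ℝ ≤ 0 :=
  (norm_eq_iInf_iff_real_inner_le_zero hZ hp.1).1 hp.norm_sub_eq_iInf_s5 z hz

theorem three_point_inequality (hp : IsArgminStep Z w γ u p) (hZ : Convex ℝ Z) (hz : z ∈ Z) :
    γ * ⟪p - z, u⟫_ℝ ≤ (‖z - w‖ ^ 2 - ‖p - w‖ ^ 2 - ‖z - p‖ ^ 2) / 2 := by
  have hangle : ⟪w - p, z - p⟫_ℝ + γ * ⟪p - z, u⟫_ℝ ≤ 0 := by
    calc ⟪w - p, z - p⟫_ℝ + γ * ⟪p - z, u⟫_ℝ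
        = ⟪w - γ • u - p, z - p⟫_ℝ := by
          rw [sub_right_comm, inner_sub_left (w - p), real_inner_smul_left, real_inner_comm,
            real_inner_comm (z - p) u, ← neg_sub z p, inner_neg_left]
          ring
      _ ≤ 0 := hp.inner_sub_nonpos hZ hz
  have hcosine : ‖z - w‖ ^ 2 = ‖p - w‖ ^ 2 - 2 * ⟪w - p, z - p⟫_ℝ + ‖z - p‖ ^ 2 := by
    rw [norm_sub_rev z w, norm_sub_rev p w, ← norm_sub_sq_real, sub_sub_sub_cancel_right]
  linarith

theorem extragradient_inequality (hp : IsArgminStep Z w γ u p) (hq : IsArgminStep Z w γ v q)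
    (hZ : Convex ℝ Z) (hz : z ∈ Z) :
    γ * ⟪p - z, v⟫_ℝ ≤
      (‖z - w‖ ^ 2 - ‖z - q‖ ^ 2) / 2 - ‖p - w‖ ^ 2 / 2 + γ ^ 2 * ‖v - u‖ ^ 2 / 2 := by
  have hsplit : ⟪p - z, v⟫_ℝ = ⟪q - z, v⟫_ℝ + ⟪p - q, u⟫_ℝ + ⟪p - q, v - u⟫_ℝ := by
    simp only [inner_sub_left, inner_sub_right]
    ring
  have hcross : γ * ⟪p - q, v - u⟫_ℝ ≤ (‖q - p‖ ^ 2 + γ ^ 2 * ‖v - u‖ ^ 2) / 2 := by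
    calc γ * ⟪p - q, v - u⟫_ℝ
        = ⟪p - q, γ • (v - u)⟫_ℝ := (real_inner_smul_right _ _ _).symm
      _ ≤ (‖p - q‖ ^ 2 + ‖γ • (v - u)‖ ^ 2) / 2 := real_inner_le_half_norm_sq_add_norm_sq _ _
      _ = (‖q - p‖ ^ 2 + γ ^ 2 * ‖v - u‖ ^ 2) / 2 := by
        rw [norm_sub_rev, norm_smul, mul_pow, Real.norm_eq_abs, sq_abs]
  rw [hsplit]
  linarith [hp.three_point_inequality hZ hq.1, hq.three_point_inequality hZ hz]

end IsArgminStep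

theorem statement_5_general {Z : Set E} (hZ : Convex ℝ Z) {F : E → E} {g w p q : E} {γ ℓ : ℝ}
    (hF : ‖F p - F w‖ ≤ ℓ * ‖p - w‖)
    (hp : IsArgminStep Z w γ (F w + g) p) (hq : IsArgminStep Z w γ (F p + g) q)
    {z : E} (hz : z ∈ Z) :
    γ * ⟪p - z, F p + g⟫_ℝ ≤
      (‖z - w‖ ^ 2 - ‖z - q‖ ^ 2) / 2 - (1 / 2 - γ ^ 2 * ℓ ^ 2 / 2) * ‖p - w‖ ^ 2 := by
  calc γ * ⟪p - z, F p + g⟫_ℝ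
      ≤ (‖z - w‖ ^ 2 - ‖z - q‖ ^ 2) / 2 - ‖p - w‖ ^ 2 / 2
          + γ ^ 2 * ‖F p - F w‖ ^ 2 / 2 := by
        simpa only [add_sub_add_right_eq_sub] using hp.extragradient_inequality hq hZ hz
    _ ≤ (‖z - w‖ ^ 2 - ‖z - q‖ ^ 2) / 2 - ‖p - w‖ ^ 2 / 2
          + γ ^ 2 * (ℓ * ‖p - w‖) ^ 2 / 2 := by gcongr
    _ = (‖z - w‖ ^ 2 - ‖z - q‖ ^ 2) / 2 - (1 / 2 - γ ^ 2 * ℓ ^ 2 / 2) * ‖p - w‖ ^ 2 := by ring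

end

/-- Lemma AMP-descent: the one-step descent inequality.
Let `Z ⊆ ℝ^n` be nonempty, closed and convex, `F` be `ℓ_F`-Lipschitz on `Z`, `g ∈ ℝ^n` a
fixed vector, `w_k ∈ Z`, `γ_k > 0`, and let
`z_{k+1} = argmin_{z ∈ Z} γ_k ⟪z - w_k, F(w_k) + g⟫ + ½‖z - w_k‖²` and
`w_{k+1} = argmin_{z ∈ Z} γ_k ⟪z - w_k, F(z_{k+1}) + g⟫ + ½‖z - w_k‖²`.  Then for all
`z ∈ Z`, `γ_k ⟪z_{k+1} - z, F(z_{k+1}) + g⟫ ≤ ½(‖z - w_k‖² - ‖z - w_{k+1}‖²)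
- (½ - γ_k² ℓ_F²/2) ‖z_{k+1} - w_k‖²`. -/
theorem statement_5 {n : ℕ} (Z : Set (EuclideanSpace ℝ (Fin n)))
    (hZne : Z.Nonempty) (hZclosed : IsClosed Z) (hZconvex : Convex ℝ Z)
    (ℓF : ℝ)
    (F : EuclideanSpace ℝ (Fin n) → EuclideanSpace ℝ (Fin n))
    (hFlip : ∀ z ∈ Z, ∀ z' ∈ Z, ‖F z - F z'‖ ≤ ℓF * ‖z - z'‖)
    (gvec : EuclideanSpace ℝ (Fin n))
    (wk : EuclideanSpace ℝ (Fin n)) (hwk : wk ∈ Z) (γ : ℝ) (hγ : 0 < γ)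
    (zk1 wk1 : EuclideanSpace ℝ (Fin n))
    (hzk1 : IsArgminStep Z wk γ (F wk + gvec) zk1)
    (hwk1 : IsArgminStep Z wk γ (F zk1 + gvec) wk1) :
    ∀ z ∈ Z,
      γ * ⟪zk1 - z, F zk1 + gvec⟫_ℝ ≤
        (‖z - wk‖ ^ 2 - ‖z - wk1‖ ^ 2) / 2 - (1 / 2 - γ ^ 2 * ℓF ^ 2 / 2) * ‖zk1 - wk‖ ^ 2 :=
  fun _ hz ↦ statement_5_general hZconvex (hFlip zk1 hzk1.1 wk hwk) hzk1 hwk1 hz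
end
end

section
/- Let A ∈ ℝ^{m×n}, E ∈ ℝ^{e×n} and b ∈ ℝ^n. Then exactly one of the following two systems has a solution: (i) there exists x ∈ ℝ^n with Ax ≤ 0 (componentwise), Ex = 0 and bᵀx > 0; (ii) there exist y ∈ ℝ^m with y ≥ 0 (componentwise) and z ∈ ℝ^e such that Aᵀy + Eᵀz − b = 0. -/
open Matrix

/-!
Both systems are about the cone `K` spanned by the rows of `A` (with nonnegative coefficients) and
of `E` (with arbitrary coefficients): system (ii) says that `b` lies in `K`, and system (i), after
replacing `x` by `-x`, gives an `x` in the dual cone on which `b` is negative.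

That `b` lies in `K` if it is nonnegative on the dual cone is shown by induction on the number of
inequalities. Relax an inequality `0 ≤ ⟪c, x⟫` to the equation `⟪c, x⟫ = 0`: by induction `b` lies
in the cone in which the coefficient `r` of `c` is unrestricted. If `b` is nonnegative even after
dropping `c`, the claim follows by induction again. Otherwise there is a `u` that violates only this
inequality and has `⟪b, u⟫ < 0`, and evaluating at `u` forces `r > 0`.
-/

section Cone

theorem apply_nonneg_of_mem_span_sup_hull {R M : Type*} [Semiring R] [PartialOrder R]
    [IsOrderedRing R] [AddCommMonoid M] [Module R M] {s t : Set M} {b : M} {f : M →ₗ[R] R}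
    (ht : ∀ a ∈ t, f a = 0) (hs : ∀ a ∈ s, 0 ≤ f a)
    (hb : b ∈ (Submodule.span R t : PointedCone R M) ⊔ PointedCone.hull R s) : 0 ≤ f b := by
  obtain ⟨w, hw, d, hd, rfl⟩ := Submodule.mem_sup.mp hb
  have hfw : f w = 0 := (Submodule.span_le (p := LinearMap.ker f)).mpr ht hw
  have hfd : 0 ≤ f d :=
    (Submodule.span_le (p := (PointedCone.positive R R).comap f)).mpr hs hd
  rwa [map_add, hfw, zero_add]

theorem mem_span_sup_hull_insert_of_apply_neg {R M : Type*} [Ring R] [LinearOrder R]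
    [IsOrderedRing R] [AddCommMonoid M] [Module R M] {s t : Set M} {b c : M} {f : M →ₗ[R] R}
    (ht : ∀ a ∈ t, f a = 0) (hs : ∀ a ∈ s, 0 ≤ f a) (hc : f c < 0) (hb : f b < 0)
    (h : b ∈ (Submodule.span R (insert c t) : PointedCone R M) ⊔ PointedCone.hull R s) :
    b ∈ (Submodule.span R t : PointedCone R M) ⊔ PointedCone.hull R (insert c s) := by
  obtain ⟨w', hw', d, hd, rfl⟩ := Submodule.mem_sup.mp h
  obtain ⟨r, w, hw, rfl⟩ := Submodule.mem_span_insert.mp hw'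
  have hwd : 0 ≤ f (w + d) :=
    apply_nonneg_of_mem_span_sup_hull ht hs (Submodule.add_mem_sup hw hd)
  have hr : 0 < r := by
    rw [add_assoc, map_add, map_smul, smul_eq_mul] at hb
    exact pos_of_mul_neg_left ((le_add_of_nonneg_right hwd).trans_lt hb) hc.le
  rw [add_comm (r • c), add_assoc]
  refine Submodule.add_mem_sup hw (add_mem ?_ (Submodule.span_mono (Set.subset_insert c s) hd))
  exact PointedCone.smul_mem _ hr.le (PointedCone.subset_hull (Set.mem_insert c s))

variable {𝕜 M N : Type*} [Field 𝕜] [AddCommGroup M] [Module 𝕜 M] [AddCommGroup N] [Module 𝕜 N]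
  {p : M →ₗ[𝕜] N →ₗ[𝕜] 𝕜} {s t : Set M} {b : M}

theorem mem_span_of_forall_apply_eq_zero (hp : Function.Injective p) (ht : t.Finite)
    (h : ∀ x, (∀ a ∈ t, p a x = 0) → p b x = 0) : b ∈ Submodule.span 𝕜 t := by
  have : Finite t := ht.to_subtype
  have hpb : p b ∈ Submodule.span 𝕜 (Set.range fun a : t => p a) :=
    mem_span_of_iInf_ker_le_ker fun x hx => h x (by simpa using hx)
  rw [← Set.image_eq_range, Submodule.span_image] at hpb
  obtain ⟨w, hw, hwb⟩ := hpb
  rwa [← hp hwb]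

variable [LinearOrder 𝕜] [IsStrictOrderedRing 𝕜]

theorem mem_span_sup_hull_of_forall_apply_nonneg (hp : Function.Injective p) (hs : s.Finite)
    (ht : t.Finite)
    (h : ∀ x, (∀ a ∈ t, p a x = 0) → (∀ a ∈ s, 0 ≤ p a x) → 0 ≤ p b x) :
    b ∈ (Submodule.span 𝕜 t : PointedCone 𝕜 M) ⊔ PointedCone.hull 𝕜 s := by
  induction s, hs using Set.Finite.induction_on generalizing t with
  | empty =>
    refine Submodule.mem_sup_left (mem_span_of_forall_apply_eq_zero hp ht fun x hx => ?_)
    have hneg : 0 ≤ p b (-x) := h (-x) (by simpa using hx) (by simp)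
    exact le_antisymm (by simpa using hneg) (h x hx (by simp))
  | @insert c s _ _ ih =>
    by_cases hdrop : ∀ x, (∀ a ∈ t, p a x = 0) → (∀ a ∈ s, 0 ≤ p a x) → 0 ≤ p b x
    · have hmono : PointedCone.hull 𝕜 s ≤ PointedCone.hull 𝕜 (insert c s) :=
        Submodule.span_mono (Set.subset_insert c s)
      exact sup_le_sup_left hmono _ (ih ht hdrop)
    push Not at hdrop
    obtain ⟨u, htu, hsu, hbu⟩ := hdrop
    have hcu : p c u < 0 := by
      by_contra! hcu
      exact hbu.not_ge (h u htu (Set.forall_mem_insert.mpr ⟨hcu, hsu⟩))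
    have hrelax : b ∈ (Submodule.span 𝕜 (insert c t) : PointedCone 𝕜 M) ⊔ PointedCone.hull 𝕜 s := by
      refine ih (ht.insert c) fun x htx hsx => ?_
      obtain ⟨hcx, htx⟩ := Set.forall_mem_insert.mp htx
      exact h x htx (Set.forall_mem_insert.mpr ⟨hcx.ge, hsx⟩)
    exact mem_span_sup_hull_insert_of_apply_neg (f := p.flip u) htu hsu hcu hbu hrelax

theorem mem_span_sup_hull_iff_forall_apply_nonneg (hp : Function.Injective p) (hs : s.Finite)
    (ht : t.Finite) :
    b ∈ (Submodule.span 𝕜 t : PointedCone 𝕜 M) ⊔ PointedCone.hull 𝕜 s ↔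
      ∀ x, (∀ a ∈ t, p a x = 0) → (∀ a ∈ s, 0 ≤ p a x) → 0 ≤ p b x :=
  ⟨fun hb x htx hsx => apply_nonneg_of_mem_span_sup_hull (f := p.flip x) htx hsx hb,
    mem_span_sup_hull_of_forall_apply_nonneg hp hs ht⟩

end Cone

section Matrix

theorem mem_hull_range_row_iff {R m n : Type*} [CommSemiring R] [PartialOrder R] [IsOrderedRing R]
    [Fintype m] {A : Matrix m n R} {b : n → R} :
    b ∈ PointedCone.hull R (Set.range A.row) ↔ ∃ y : m → R, (∀ i, 0 ≤ y i) ∧ Aᵀ *ᵥ y = b := by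
  simp only [Submodule.mem_span_range_iff_exists_fun, mulVec_transpose, vecMul_eq_sum]
  exact ⟨fun ⟨y, hy⟩ => ⟨fun i => y i, fun i => (y i).2, hy⟩,
    fun ⟨y, hy₀, hy⟩ => ⟨fun i => ⟨y i, hy₀ i⟩, hy⟩⟩

theorem mem_span_range_row_iff {R m n : Type*} [CommSemiring R] [Fintype m] {E : Matrix m n R}
    {b : n → R} : b ∈ Submodule.span R (Set.range E.row) ↔ ∃ z : m → R, Eᵀ *ᵥ z = b := by
  simp only [Submodule.mem_span_range_iff_exists_fun, mulVec_transpose, vecMul_eq_sum]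
  rfl

theorem mem_span_row_sup_hull_row_iff_exists {R m e n : Type*} [CommSemiring R] [PartialOrder R]
    [IsOrderedRing R] [Fintype m] [Fintype e] {A : Matrix m n R} {E : Matrix e n R} {b : n → R} :
    b ∈ (Submodule.span R (Set.range E.row) : PointedCone R (n → R)) ⊔
        PointedCone.hull R (Set.range A.row) ↔
      ∃ (y : m → R) (z : e → R), (∀ i, 0 ≤ y i) ∧ Aᵀ *ᵥ y + Eᵀ *ᵥ z = b := by
  simp only [Submodule.mem_sup, PointedCone.mem_ofSubmodule_iff, mem_span_range_row_iff,
    mem_hull_range_row_iff]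
  constructor
  · rintro ⟨_, ⟨z, rfl⟩, _, ⟨y, hy, rfl⟩, rfl⟩
    exact ⟨y, z, hy, add_comm _ _⟩
  · rintro ⟨y, z, hy, rfl⟩
    exact ⟨_, ⟨z, rfl⟩, _, ⟨y, hy, rfl⟩, add_comm _ _⟩

variable {𝕜 m e n : Type*} [Field 𝕜] [LinearOrder 𝕜] [IsStrictOrderedRing 𝕜] [Fintype n]

theorem mem_span_row_sup_hull_row_iff_forall [Finite m] [Finite e] {A : Matrix m n 𝕜}
    {E : Matrix e n 𝕜} {b : n → 𝕜} :
    b ∈ (Submodule.span 𝕜 (Set.range E.row) : PointedCone 𝕜 (n → 𝕜)) ⊔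
        PointedCone.hull 𝕜 (Set.range A.row) ↔
      ∀ x, E *ᵥ x = 0 → (∀ i, 0 ≤ (A *ᵥ x) i) → 0 ≤ b ⬝ᵥ x := by
  have hinj : Function.Injective (dotProductBilin 𝕜 𝕜 : (n → 𝕜) →ₗ[𝕜] (n → 𝕜) →ₗ[𝕜] 𝕜) :=
    fun v w hvw => dotProduct_eq v w (LinearMap.congr_fun hvw)
  rw [mem_span_sup_hull_iff_forall_apply_nonneg hinj (Set.finite_range _) (Set.finite_range _)]
  simp only [Set.forall_mem_range, funext_iff]
  rfl

theorem statement_10_general [Fintype m] [Fintype e] (A : Matrix m n 𝕜) (E : Matrix e n 𝕜)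
    (b : n → 𝕜) :
    Xor (∃ x : n → 𝕜, (∀ i, (A *ᵥ x) i ≤ 0) ∧ E *ᵥ x = 0 ∧ 0 < b ⬝ᵥ x)
      (∃ (y : m → 𝕜) (z : e → 𝕜), (∀ i, 0 ≤ y i) ∧ Aᵀ *ᵥ y + Eᵀ *ᵥ z - b = 0) := by
  simp only [sub_eq_zero]
  rw [← mem_span_row_sup_hull_row_iff_exists, mem_span_row_sup_hull_row_iff_forall,
    xor_iff_iff_not]
  push Not
  rw [(Equiv.neg (n → 𝕜)).exists_congr_left]
  simp [mulVec_neg, and_left_comm]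

end Matrix

/-- a Farkas-type alternative.
For `A ∈ ℝ^{m×n}`, `E ∈ ℝ^{e×n}` and `b ∈ ℝ^n`, exactly one of the following two systems
has a solution: (i) `Ax ≤ 0`, `Ex = 0`, `bᵀx > 0`; (ii) `Aᵀy + Eᵀz - b = 0`, `y ≥ 0`. -/
theorem statement_10 {m e n : ℕ} (A : Matrix (Fin m) (Fin n) ℝ)
    (E : Matrix (Fin e) (Fin n) ℝ) (b : Fin n → ℝ) :
    Xor' (∃ x : Fin n → ℝ, (∀ i, A.mulVec x i ≤ 0) ∧ E.mulVec x = 0 ∧ 0 < b ⬝ᵥ x)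
      (∃ (y : Fin m → ℝ) (z : Fin e → ℝ), (∀ i, 0 ≤ y i) ∧
        Aᵀ.mulVec y + Eᵀ.mulVec z - b = 0) :=
  statement_10_general A E b
end
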